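/- A Nat-algebra (N, z, s) is inductive (every displayed Nat-algebra over it has a section) if and only if it is initial in the category of Nat-algebras (i.e. for every Nat-algebra (M, z', s') there is exactly one Nat-algebra homomorphism from (N, z, s) to (M, z', s')). -/

import Mathlib

universe u

/-- A Nat-algebra `(N, z, s)` is inductive: every displayed Nat-algebra over it
has a section. -/
def NatAlgInductive {N : Type u} (z : N) (s : N → N) : Prop :=
  ∀ (D : N → Type u) (zD : D z) (sD : ∀ n : N, D n → D (s n)),
    ∃ h : ∀ n, D n, h z = zD ∧ ∀ n : N, h (s n) = sD n (h n)

/-- A Nat-algebra `(N, z, s)` is initial: every Nat-algebra admits exactly one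
homomorphism from it. -/
def NatAlgInitial {N : Type u} (z : N) (s : N → N) : Prop :=
  ∀ (M : Type u) (z' : M) (s' : M → M),
    ∃! k : N → M, k z = z' ∧ ∀ n : N, k (s n) = s' (k n)

/-- a Nat-algebra is inductive iff it is initial. -/
theorem natAlg_inductive_iff_initial (N : Type u) (z : N) (s : N → N) :
    NatAlgInductive z s ↔ NatAlgInitial z s := by
  constructor
  · intro H M z' s'
    obtain ⟨k, hz, hs⟩ := H (fun _ => M) z' (fun _ => s')
    refine ⟨k, ⟨hz, hs⟩, ?_⟩
    rintro l ⟨lz, ls⟩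
    obtain ⟨p, -⟩ := H (fun n => ULift.{u} (PLift (l n = k n))) ⟨⟨lz.trans hz.symm⟩⟩
      (fun n e => ⟨⟨by rw [ls, hs, e.down.down]⟩⟩)
    exact funext fun n => (p n).down.down
  · intro H D zD sD
    obtain ⟨k, ⟨hz, hs⟩, -⟩ := H (Sigma D) ⟨z, zD⟩ (fun x => ⟨s x.1, sD x.1 x.2⟩)
    have hfst : (fun n => (k n).1) = id :=
      (H N z s).unique ⟨by simp [hz], fun n => by simp [hs]⟩ ⟨rfl, fun _ => rfl⟩
    have hex : ∀ n, ∃ d : D n, k n = ⟨n, d⟩ := by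
      intro n
      have e : (k n).1 = n := congrFun hfst n
      generalize k n = x at e
      subst e
      exact ⟨x.2, rfl⟩
    choose h hh using hex
    refine ⟨h, ?_, fun n => ?_⟩
    · exact eq_of_heq (Sigma.mk.inj ((hh z).symm.trans hz)).2
    · have e := (hh (s n)).symm.trans (hs n)
      rw [hh n] at e
      exact eq_of_heq (Sigma.mk.inj e).2
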